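/- Let p be a prime and let n be a positive integer. Then ρ(n,p) = ∏_{i=1}^{⌊n/p⌋} (1 − 1/(ip)). -/

import Mathlib

/-- `rho n m` is the proportion of permutations in `Sym(n)` whose order is coprime to `m`. -/
noncomputable def rho (n m : ℕ) : ℝ :=
  (Finset.univ.filter (fun π : Equiv.Perm (Fin n) => Nat.Coprime (orderOf π) m)).card /
    (Nat.factorial n : ℝ)

/-- weight of a multiset: size of the centralizer of a permutation with these cycle lengths -/
def zw (s : Multiset ℕ) : ℕ := s.prod * ∏ i ∈ s.toFinset, (s.count i).factorial

theorem zw_cons (i : ℕ) (s : Multiset ℕ) : zw (i ::ₘ s) = zw s * (i * (s.count i + 1)) := by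
  classical
  have key : ∀ t : Multiset ℕ, t.toFinset ⊆ insert i s.toFinset →
      ∏ j ∈ t.toFinset, (t.count j).factorial
        = (t.count i).factorial * ∏ j ∈ (insert i s.toFinset).erase i, (t.count j).factorial := by
    intro t ht
    rw [Finset.mul_prod_erase _ (fun j => (t.count j).factorial) (Finset.mem_insert_self _ _)]
    apply Finset.prod_subset ht
    intro x _ hx
    rw [Multiset.mem_toFinset] at hx
    rw [Multiset.count_eq_zero_of_notMem hx]; rfl
  unfold zw
  rw [key s (Finset.subset_insert _ _), key (i ::ₘ s) (by rw [Multiset.toFinset_cons]),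
    Multiset.count_cons_self, Multiset.prod_cons, Nat.factorial_succ]
  have : ∏ j ∈ (insert i s.toFinset).erase i, ((i ::ₘ s).count j).factorial
      = ∏ j ∈ (insert i s.toFinset).erase i, (s.count j).factorial := by
    apply Finset.prod_congr rfl
    intro j hj
    rw [Multiset.count_cons_of_ne (Finset.ne_of_mem_erase hj)]
  rw [this]; ring

theorem zw_replicate (m : Multiset ℕ) (hm : 1 ∉ m) (k : ℕ) :
    zw (m + Multiset.replicate k 1) = zw m * k.factorial := by
  induction k with
  | zero => simp
  | succ k ih =>
    rw [Multiset.replicate_succ, Multiset.add_cons, zw_cons, ih, Multiset.count_add,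
      Multiset.count_eq_zero_of_notMem hm, Multiset.count_replicate_self, Nat.factorial_succ]
    ring

theorem zw_pos (s : Multiset ℕ) (hs : ∀ i ∈ s, 0 < i) : 0 < zw s := by
  unfold zw
  have : 0 < s.prod := Multiset.prod_pos hs
  positivity

/-- the multisets of sum `n` with no part divisible by `p` -/
def SS (p n : ℕ) : Finset (Multiset ℕ) :=
  ((Finset.univ : Finset (n.Partition)).image (fun l => l.parts)).filter
    (fun s => ∀ i ∈ s, ¬ p ∣ i)

theorem mem_SS (p n : ℕ) (s : Multiset ℕ) : s ∈ SS p n ↔ s.sum = n ∧ ∀ i ∈ s, ¬ p ∣ i := by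
  unfold SS
  simp only [Finset.mem_filter, Finset.mem_image, Finset.mem_univ, true_and]
  constructor
  · rintro ⟨⟨l, rfl⟩, h⟩
    exact ⟨l.parts_sum, h⟩
  · rintro ⟨h, h2⟩
    refine ⟨⟨⟨s, ?_, h⟩, rfl⟩, h2⟩
    intro i hi
    rcases Nat.eq_zero_or_pos i with rfl | h0
    · exact absurd (dvd_zero p) (h2 0 hi)
    · exact h0

theorem SS_pos {p n : ℕ} {s : Multiset ℕ} (hs : s ∈ SS p n) : ∀ i ∈ s, 0 < i := by
  intro i hi
  rcases Nat.eq_zero_or_pos i with rfl | h0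
  · exact absurd (dvd_zero p) (((mem_SS p n s).1 hs).2 0 hi)
  · exact h0

/-- normalised count -/
noncomputable def AA (p n : ℕ) : ℝ := ∑ s ∈ SS p n, 1 / (zw s : ℝ)

theorem prime_dvd_mlcm {p : ℕ} (hp : p.Prime) (s : Multiset ℕ) :
    p ∣ s.lcm ↔ ∃ i ∈ s, p ∣ i := by
  induction s using Multiset.induction_on with
  | empty => simp [hp.one_lt.ne']
  | cons a s ih => rw [Multiset.lcm_cons, hp.prime.dvd_lcm, ih]; simp

theorem card_parts (p n : ℕ) (s : Multiset ℕ) (hs : s ∈ SS p n) :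
    (Finset.univ.filter (fun π : Equiv.Perm (Fin n) => π.partition.parts = s)).card * zw s
      = n.factorial := by
  classical
  have hpos := SS_pos hs
  obtain ⟨hsum, -⟩ := (mem_SS p n s).1 hs
  set m := s.filter (fun i => 2 ≤ i) with hm
  have h1 : s = m + Multiset.replicate (s.count 1) 1 := by
    conv_lhs => rw [← Multiset.filter_add_not (fun i => 2 ≤ i) s]
    congr 1
    rw [← Multiset.filter_eq' s 1]
    apply Multiset.filter_congr
    intro x hx
    have := hpos x hx
    omega
  have hms : m.sum + s.count 1 = n := by
    rw [← hsum]
    conv_rhs => rw [h1]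
    simp
  have hm2 : ∀ a ∈ m, 2 ≤ a := fun a ha => (Multiset.mem_filter.1 ha).2
  have hm1 : 1 ∉ m := fun h => by have := hm2 1 h; omega
  have hc := Equiv.Perm.card_of_cycleType_mul_eq (Fin n) m
  rw [if_pos ⟨by rw [Fintype.card_fin]; omega, hm2⟩, Fintype.card_fin] at hc
  have hz : zw s = (n - m.sum).factorial * m.prod * ∏ i ∈ m.toFinset, (m.count i).factorial := by
    rw [h1, zw_replicate m hm1, zw]
    have : s.count 1 = n - m.sum := by omega
    rw [this]; ring
  rw [← hc, hz]
  congr 2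
  ext π
  simp only [Finset.mem_filter, Finset.mem_univ, true_and]
  constructor
  · intro h
    rw [← Equiv.Perm.filter_parts_partition_eq_cycleType, h]
  · intro h
    rw [Equiv.Perm.parts_partition, ← Equiv.Perm.sum_cycleType, h, Fintype.card_fin]
    have : s.count 1 = n - m.sum := by omega
    rw [← this, ← h1]

theorem rho_eq (p n : ℕ) (hp : p.Prime) : rho n p = AA p n := by
  classical
  unfold rho AA
  have hf : ∀ π ∈ Finset.univ.filter (fun π : Equiv.Perm (Fin n) => Nat.Coprime (orderOf π) p),
      π.partition.parts ∈ SS p n := by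
    intro π hπ
    simp only [Finset.mem_filter, Finset.mem_univ, true_and] at hπ
    rw [mem_SS]
    refine ⟨by rw [π.partition.parts_sum, Fintype.card_fin], ?_⟩
    rw [Nat.coprime_comm, hp.coprime_iff_not_dvd, ← Equiv.Perm.lcm_cycleType,
      prime_dvd_mlcm hp] at hπ
    intro i hi hd
    rw [Equiv.Perm.parts_partition, Multiset.mem_add] at hi
    rcases hi with hi | hi
    · exact hπ ⟨i, hi, hd⟩
    · rw [Multiset.eq_of_mem_replicate hi] at hd
      exact hp.one_lt.ne' (Nat.dvd_one.1 hd)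
  rw [Finset.card_eq_sum_card_fiberwise hf, Nat.cast_sum, Finset.sum_div]
  apply Finset.sum_congr rfl
  intro s hs
  have hz : (0:ℝ) < zw s := by exact_mod_cast zw_pos s (SS_pos hs)
  have hc := card_parts p n s hs
  rw [div_eq_div_iff (by positivity) hz.ne', one_mul]
  rw [← hc]
  push_cast
  congr 3
  ext π
  simp only [Finset.mem_filter, Finset.mem_univ, true_and]
  refine ⟨fun h => h.2, fun h => ⟨?_, h⟩⟩
  rw [Nat.coprime_comm, hp.coprime_iff_not_dvd, ← Equiv.Perm.lcm_cycleType, prime_dvd_mlcm hp]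
  rintro ⟨i, hi, hd⟩
  refine ((mem_SS p n s).1 hs).2 i ?_ hd
  rw [← h, Equiv.Perm.parts_partition, Multiset.mem_add]
  exact Or.inl hi

theorem AA_inner (p n i : ℕ) (hi : i ≤ n) (hpi : ¬ p ∣ i) :
    ∑ s ∈ SS p n, ((s.count i * i : ℕ) : ℝ) / (zw s : ℝ) = AA p (n - i) := by
  classical
  have h0 : ∑ s ∈ SS p n, ((s.count i * i : ℕ) : ℝ) / (zw s : ℝ)
      = ∑ s ∈ (SS p n).filter (fun s => i ∈ s), ((s.count i * i : ℕ) : ℝ) / (zw s : ℝ) := by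
    symm
    apply Finset.sum_subset (Finset.filter_subset _ _)
    intro s hs hns
    have : i ∉ s := fun h => hns (Finset.mem_filter.2 ⟨hs, h⟩)
    rw [Multiset.count_eq_zero_of_notMem this]; simp
  rw [h0]
  unfold AA
  symm
  apply Finset.sum_bij' (fun s _ => i ::ₘ s) (fun s _ => s.erase i)
  · intro s hs
    rw [mem_SS] at hs
    rw [Finset.mem_filter, mem_SS]
    refine ⟨⟨?_, ?_⟩, Multiset.mem_cons_self _ _⟩
    · rw [Multiset.sum_cons, hs.1]; omega
    · intro j hj
      rcases Multiset.mem_cons.1 hj with rfl | hj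
      · exact hpi
      · exact hs.2 j hj
  · intro s hs
    rw [Finset.mem_filter, mem_SS] at hs
    rw [mem_SS]
    refine ⟨?_, fun j hj => hs.1.2 j (Multiset.mem_of_mem_erase hj)⟩
    have := Multiset.sum_erase hs.2
    omega
  · intro s _
    simp
  · intro s hs
    exact Multiset.cons_erase (Finset.mem_filter.1 hs).2
  · intro s hs
    rw [zw_cons, Multiset.count_cons_self]
    have hz : (0:ℝ) < zw s := by exact_mod_cast zw_pos s (SS_pos hs)
    have hi0 : (i:ℝ) ≠ 0 := by
      rintro h
      have : i = 0 := by exact_mod_cast h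
      exact hpi (this ▸ dvd_zero p)
    push_cast
    field_simp

theorem AA_rec (p n : ℕ) :
    (n : ℝ) * AA p n = ∑ i ∈ Finset.range (n + 1), if p ∣ i then 0 else AA p (n - i) := by
  classical
  have h1 : (n : ℝ) * AA p n
      = ∑ s ∈ SS p n, ∑ i ∈ Finset.range (n + 1), ((s.count i * i : ℕ) : ℝ) / (zw s : ℝ) := by
    unfold AA
    rw [Finset.mul_sum]
    apply Finset.sum_congr rfl
    intro s hs
    rw [← Finset.sum_div, ← Nat.cast_sum, mul_one_div]
    congr 2
    have hs' := ((mem_SS p n s).1 hs).1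
    conv_lhs => rw [← hs', Finset.sum_multiset_count]
    simp only [smul_eq_mul]
    apply Finset.sum_subset
    · intro j hj
      rw [Multiset.mem_toFinset] at hj
      have := Multiset.le_sum_of_mem hj
      rw [Finset.mem_range]; omega
    · intro j _ hj
      rw [Multiset.mem_toFinset] at hj
      rw [Multiset.count_eq_zero_of_notMem hj]; simp
  rw [h1, Finset.sum_comm]
  apply Finset.sum_congr rfl
  intro i hi
  rw [Finset.mem_range] at hi
  split_ifs with hd
  · apply Finset.sum_eq_zero
    intro s hs
    have : i ∉ s := fun h => ((mem_SS p n s).1 hs).2 i h hd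
    rw [Multiset.count_eq_zero_of_notMem this]; simp
  · exact AA_inner p n i (by omega) hd

/-- the product -/
noncomputable def PP (p k : ℕ) : ℝ := ∏ i ∈ Finset.Icc 1 k, (1 - 1 / ((i : ℝ) * p))

theorem PP_succ (p k : ℕ) (hp : 0 < p) :
    ((k + 1 : ℕ) : ℝ) * p * PP p (k + 1) = (((k + 1 : ℕ) : ℝ) * p - 1) * PP p k := by
  unfold PP
  rw [Finset.prod_Icc_succ_top (by omega)]
  have h1 : ((k + 1 : ℕ) : ℝ) ≠ 0 := by positivity
  have h2 : (p : ℝ) ≠ 0 := by positivity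
  field_simp

theorem AA_rec_p (p n : ℕ) (hp : 0 < p) :
    ((n + p : ℕ) : ℝ) * AA p (n + p)
      = (n : ℝ) * AA p n + ∑ i ∈ Finset.Ico 1 p, AA p (n + p - i) := by
  rw [AA_rec p (n + p), AA_rec p n, show n + p + 1 = p + (n + 1) by ring, Finset.sum_range_add,
    add_comm]
  congr 1
  · apply Finset.sum_congr rfl
    intro i _
    simp only [Nat.dvd_add_right (dvd_refl p)]
    rw [show n + p - (p + i) = n - i by omega]
  · rw [Finset.range_eq_Ico, Finset.sum_eq_sum_Ico_succ_bot hp]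
    simp only [dvd_zero, if_true, zero_add]
    apply Finset.sum_congr rfl
    intro i hi
    rw [Finset.mem_Ico] at hi
    rw [if_neg (fun h => absurd (Nat.le_of_dvd (by omega) h) (by omega))]

theorem AA_zero (p : ℕ) : AA p 0 = 1 := by
  have : SS p 0 = {0} := by
    ext s
    rw [mem_SS, Finset.mem_singleton]
    constructor
    · rintro ⟨h, h2⟩
      apply Multiset.eq_zero_of_forall_notMem
      intro a ha
      have := Multiset.le_sum_of_mem ha
      have h0 : a = 0 := by omega
      exact h2 a ha (h0 ▸ dvd_zero p)
    · rintro rfl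
      simp
  unfold AA
  rw [this]
  simp [zw]

theorem AA_eq (p : ℕ) (hp : 0 < p) (n : ℕ) : AA p n = PP p (n / p) := by
  induction n using Nat.strong_induction_on with
  | _ n ih =>
  rcases Nat.eq_zero_or_pos n with rfl | hn
  · rw [AA_zero, Nat.zero_div]; simp [PP]
  have hn' : (n : ℝ) ≠ 0 := by positivity
  apply mul_left_cancel₀ hn'
  by_cases hnp : n < p
  · rw [AA_rec, Nat.div_eq_of_lt hnp, Finset.range_eq_Ico,
      Finset.sum_eq_sum_Ico_succ_bot (by omega)]
    simp only [dvd_zero, if_true, zero_add]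
    rw [Finset.sum_congr rfl (g := fun _ => (1:ℝ))]
    · simp [PP]
    · intro i hi
      rw [Finset.mem_Ico] at hi
      rw [if_neg (fun h => absurd (Nat.le_of_dvd (by omega) h) (by omega)), ih _ (by omega),
        Nat.div_eq_of_lt (by omega)]
      simp [PP]
  · obtain ⟨m, rfl⟩ : ∃ m, n = m + p := ⟨n - p, by omega⟩
    rw [AA_rec_p p m hp, ih m (by omega), Nat.add_div_right _ hp]
    set q := m / p with hq
    set r := m % p with hr
    have hrp : r < p := Nat.mod_lt _ hp
    have hm : m = p * q + r := (Nat.div_add_mod m p).symm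
    have hsplit := Finset.sum_Ico_consecutive (fun i => AA p (m + p - i))
      (show 1 ≤ r + 1 by omega) (show r + 1 ≤ p by omega)
    rw [← hsplit]
    have e1 : ∑ i ∈ Finset.Ico 1 (r + 1), AA p (m + p - i) = r * PP p (q + 1) := by
      rw [Finset.sum_congr rfl (g := fun _ => PP p (q + 1))]
      · simp
      · intro i hi
        rw [Finset.mem_Ico] at hi
        rw [ih _ (by omega)]
        congr 1
        rw [show m + p - i = (r - i) + p * (q + 1) by rw [mul_add]; omega,
          Nat.add_mul_div_left _ _ hp, Nat.div_eq_of_lt (by omega)]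
        omega
    have e2 : ∑ i ∈ Finset.Ico (r + 1) p, AA p (m + p - i)
        = ((p : ℝ) - (r + 1)) * PP p q := by
      rw [Finset.sum_congr rfl (g := fun _ => PP p q)]
      · rw [Finset.sum_const, Nat.card_Ico, nsmul_eq_mul, Nat.cast_sub (by omega)]
        push_cast; ring
      · intro i hi
        rw [Finset.mem_Ico] at hi
        rw [ih _ (by omega)]
        congr 1
        rw [show m + p - i = (r + p - i) + p * q by omega,
          Nat.add_mul_div_left _ _ hp, Nat.div_eq_of_lt (by omega)]
        omega
    rw [e1, e2]
    have hP := PP_succ p q hp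
    have hmr : (m : ℝ) = p * q + r := by exact_mod_cast hm
    push_cast at hP ⊢
    rw [hmr]
    linear_combination -hP

theorem stmt_11 (p : ℕ) (hp : p.Prime) (n : ℕ) (hn : 0 < n) :
    rho n p = ∏ i ∈ Finset.Icc 1 (n / p), (1 - 1 / ((i : ℝ) * p)) := by
  rw [rho_eq p n hp, AA_eq p hp.pos n, PP]
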